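/- Let 1 ≤ i ≤ n-1. If F' is a complete flag in ℂ^n whose m-th subspace agrees with the m-th subspace of F_i for every m ≠ i, then exactly one of the following holds: F' = F_i; F' = F_{i+1}; F' lies in the K-orbit of F_{i,i+1}. Moreover each of the three possibilities occurs for some such F'. (This realizes set-theoretically that α_i is noncompact for Q_i = K·F_i and that m(s_{α_i})*Q_i = Q_{i,i+1}.) -/

import Mathlib

open Module Submodule

noncomputable section

/-- `stdVec n m` is the `m`-th standard basis vector of `ℂ^n` (1-indexed); `0` out of range. -/
def stdVec (n m : ℕ) : Fin n → ℂ :=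
  if h : 1 ≤ m ∧ m ≤ n then Pi.single (⟨m - 1, by omega⟩ : Fin n) 1 else 0

/-- `stdSub n k` is the subspace `U_k = span(e_1, …, e_k)` of `ℂ^n`. -/
def stdSub (n k : ℕ) : Submodule ℂ (Fin n → ℂ) :=
  span ℂ (stdVec n '' Set.Icc 1 k)

/-- The action of an invertible linear map of `ℂ^n` on a chain of subspaces. -/
def actFlag (n : ℕ) (g : (Fin n → ℂ) ≃ₗ[ℂ] (Fin n → ℂ))
    (V : ℕ → Submodule ℂ (Fin n → ℂ)) (k : ℕ) : Submodule ℂ (Fin n → ℂ) :=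
  Submodule.map g.toLinearMap (V k)

/-- The orbit of the chain `V` under a set `B` of invertible linear maps. -/
def orbitOf (n : ℕ) (B : Set ((Fin n → ℂ) ≃ₗ[ℂ] (Fin n → ℂ)))
    (V : ℕ → Submodule ℂ (Fin n → ℂ)) : Set (ℕ → Submodule ℂ (Fin n → ℂ)) :=
  {V' | ∃ b ∈ B, actFlag n b V = V'}

/-- A complete flag in `ℂ^n`: `V k` is the `k`-dimensional member for `0 ≤ k ≤ n`;
values above `n` are pinned so that two flags are equal iff they agree in degrees `≤ n`. -/
def IsCompleteFlag (n : ℕ) (V : ℕ → Submodule ℂ (Fin n → ℂ)) : Prop :=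
  (∀ k, k ≤ n → finrank ℂ ↥(V k) = k) ∧ (∀ k, V k ≤ V (k + 1)) ∧ (∀ k, n ≤ k → V k = V n)

/-- The complete flag `(v 1 ⊂ v 2 ⊂ ⋯ ⊂ v n)` spanned by the vectors `v 1, …, v n`. -/
def flagOf (n : ℕ) (v : ℕ → Fin n → ℂ) (k : ℕ) : Submodule ℂ (Fin n → ℂ) :=
  span ℂ (v '' Set.Icc 1 (min k n))

/-- `K = {g ∈ GL(n,ℂ) : g e_n = e_n, g U_{n-1} = U_{n-1}}`, a copy of `GL(n-1,ℂ)`. -/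
def Ksub (n : ℕ) : Set ((Fin n → ℂ) ≃ₗ[ℂ] (Fin n → ℂ)) :=
  {g | g (stdVec n n) = stdVec n n ∧
       Submodule.map g.toLinearMap (stdSub n (n - 1)) = stdSub n (n - 1)}

/-- `V'` lies in the `K`-orbit of `V`. -/
def InKOrbit (n : ℕ) (V V' : ℕ → Submodule ℂ (Fin n → ℂ)) : Prop :=
  ∃ g ∈ Ksub n, actFlag n g V = V'

/-- Vectors of the representative flags: for `i = j` this gives the flag `F_i`
`(e_1 ⊂ ⋯ ⊂ e_{i-1} ⊂ e_n ⊂ e_i ⊂ ⋯ ⊂ e_{n-1})` (`e_n` in position `i`), and for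
`i < j` the flag `F_{i,j}`
`(e_1 ⊂ ⋯ ⊂ e_{i-1} ⊂ e_i + e_n ⊂ e_{i+1} ⊂ ⋯ ⊂ e_{j-1} ⊂ e_n ⊂ e_j ⊂ ⋯ ⊂ e_{n-1})`. -/
def repVec (n i j m : ℕ) : Fin n → ℂ :=
  if m < i then stdVec n m
  else if m = i then (if i < j then stdVec n i else 0) + stdVec n n
  else if m < j then stdVec n m
  else if m = j then stdVec n n
  else stdVec n (m - 1)

/-- `repFlag n i i = F_i` and `repFlag n i j = F_{i,j}` for `i < j`. -/
def repFlag (n i j : ℕ) : ℕ → Submodule ℂ (Fin n → ℂ) := flagOf n (repVec n i j)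

/-!
A flag `V` agreeing with `F_i` away from degree `i` is determined by its member `V_i`, which lies
between `W = U_{i-1}` and `W ⊕ ⟨e_n, e_i⟩`, so these flags form the projective line of all
`W ⊕ ⟨a e_n + b e_i⟩`. The points `b = 0` and `a = 0` are `F_i` and `F_{i+1}`; every other point is
`W ⊕ ⟨c e_i + e_n⟩` with `c ≠ 0`, and the diagonal element of `K` scaling `e_i` by `c` carries
`F_{i,i+1}` to it. The conditions `e_n ∈ V_i` and `V_i ⊂ U_{n-1}` are `K`-invariant; the first holds
for `F_i`, the second for `F_{i+1}`, and neither for `F_{i,i+1}`.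
-/

section LinearAlgebra

variable {R M : Type*} [Semiring R] [AddCommMonoid M] [Module R M]

lemma eq_sup_span_singleton_of_covBy {W V : Submodule R M} {v : M} (hWV : W ⋖ V) (hv : v ∈ V)
    (hvW : v ∉ W) : V = W ⊔ span R {v} :=
  have hle : W ⊔ span R {v} ≤ V := sup_le hWV.le ((span_singleton_le_iff_mem _ _).2 hv)
  ((hWV.eq_or_eq le_sup_left hle).resolve_left fun h =>
    hvW (h ▸ mem_sup_right (mem_span_singleton_self v))).symm

lemma map_span_image_of_forall_eq_smul {ι : Type*} {g : M →ₗ[R] M} {v : ι → M} {s : Set ι}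
    (h : ∀ m ∈ s, ∃ c : Rˣ, g (v m) = c • v m) :
    (span R (v '' s)).map g = span R (v '' s) := by
  refine le_antisymm ((map_span_le _ _ _).2 ?_) (span_le.2 ?_) <;> rintro _ ⟨m, hm, rfl⟩ <;>
    obtain ⟨c, hc⟩ := h m hm <;> have hmem := subset_span (R := R) (Set.mem_image_of_mem v hm)
  · exact hc ▸ smul_mem _ _ hmem
  · exact ⟨c⁻¹ • v m, smul_mem _ _ hmem, by rw [g.map_smul_of_tower, hc, inv_smul_smul]⟩

lemma span_pair_add_left {R M : Type*} [Ring R] [AddCommGroup M] [Module R M] (x y : M) :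
    span R {x + y, y} = span R {x, y} := by
  ext z
  simp only [mem_span_pair]
  constructor <;> rintro ⟨a, b, rfl⟩
  · exact ⟨a, a + b, by rw [smul_add, add_smul, add_assoc]⟩
  · exact ⟨a, b - a, by rw [smul_add, sub_smul, add_assoc, add_sub_cancel]⟩

lemma eq_sup_span_singleton_trichotomy_of_covBy {K E : Type*} [DivisionRing K] [AddCommGroup E]
    [Module K E] {W V : Submodule K E} {x y : E} (hWV : W ⋖ V) (hV : V ≤ W ⊔ span K {x, y}) :
    V = W ⊔ span K {x} ∨ V = W ⊔ span K {y} ∨ ∃ c : Kˣ, V = W ⊔ span K {c • y + x} := by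
  obtain ⟨v, hvV, hvW⟩ := SetLike.exists_of_lt hWV.lt
  obtain ⟨w, hw, u, hu, rfl⟩ := mem_sup.1 (hV hvV)
  obtain ⟨a, b, rfl⟩ := mem_span_pair.1 hu
  have hVu : V = W ⊔ span K {a • x + b • y} :=
    eq_sup_span_singleton_of_covBy hWV ((V.add_mem_iff_right (hWV.le hw)).1 hvV)
      fun h => hvW (add_mem hw h)
  rcases eq_or_ne b 0 with rfl | hb
  · have ha : a ≠ 0 := by rintro rfl; simp [hw] at hvW
    left
    rw [hVu, zero_smul, add_zero, span_singleton_smul_eq ha.isUnit]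
  rcases eq_or_ne a 0 with rfl | ha
  · right; left
    rw [hVu, zero_smul, zero_add, span_singleton_smul_eq hb.isUnit]
  · right; right
    refine ⟨(Units.mk0 a ha)⁻¹ * Units.mk0 b hb, ?_⟩
    rw [hVu, ← span_singleton_smul_eq ha.isUnit (_ + x), smul_add, Units.smul_def, smul_smul,
      Units.val_mul, Units.val_inv_eq_inv_val, Units.val_mk0, Units.val_mk0,
      mul_inv_cancel_left₀ ha, add_comm]

end LinearAlgebra

section Flags

variable {n i k m : ℕ} {v w : ℕ → Fin n → ℂ} {V : ℕ → Submodule ℂ (Fin n → ℂ)}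

lemma IsCompleteFlag.covBy (hV : IsCompleteFlag n V) (hk : k < n) : V k ⋖ V (k + 1) := by
  obtain ⟨hdim, hmono, -⟩ := hV
  have hdim_k := hdim k hk.le
  have hdim_succ := hdim (k + 1) hk
  refine ⟨(hmono k).lt_of_ne fun h => by rw [← h] at hdim_succ; omega, fun U hkU hUk => ?_⟩
  have hlt_U := finrank_lt_finrank_of_lt hkU
  have hU_lt := finrank_lt_finrank_of_lt hUk
  omega

lemma flagOf_eq_sup_span_singleton (hk : 1 ≤ k) (hkn : k ≤ n) :
    flagOf n v k = flagOf n v (k - 1) ⊔ span ℂ {v k} := by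
  have hIcc : Set.Icc 1 (min k n) = Set.Icc 1 (min (k - 1) n) ∪ {k} := by
    ext; simp only [Set.mem_Icc, Set.mem_union, Set.mem_singleton_iff]; omega
  rw [flagOf, hIcc, Set.image_union, Set.image_singleton, span_union, flagOf]

lemma flagOf_succ_eq_sup_span_pair (hi : 1 ≤ i) (hin : i < n) :
    flagOf n v (i + 1) = flagOf n v (i - 1) ⊔ span ℂ {v i, v (i + 1)} := by
  rw [flagOf_eq_sup_span_singleton (show 1 ≤ i + 1 by omega) hin, Nat.add_sub_cancel,
    flagOf_eq_sup_span_singleton hi hin.le, sup_assoc, ← span_insert]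

lemma mem_flagOf (hm : 1 ≤ m) (hmk : m ≤ k) (hmn : m ≤ n) : v m ∈ flagOf n v k :=
  subset_span ⟨m, ⟨hm, le_min hmk hmn⟩, rfl⟩

lemma flagOf_congr (hvw : ∀ m ≤ k, v m = w m) : flagOf n v k = flagOf n w k := by
  rw [flagOf, flagOf, Set.image_congr fun m hm => hvw m (hm.2.trans (min_le_left _ _))]

lemma flagOf_eq_flagOf_of_span_pair_eq (hi : 1 ≤ i) (hin : i < n)
    (hvw : ∀ m, m ≠ i → m ≠ i + 1 → v m = w m)
    (hspan : span ℂ {v i, v (i + 1)} = span ℂ {w i, w (i + 1)}) (hm : m ≠ i) :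
    flagOf n v m = flagOf n w m := by
  rcases hm.lt_or_gt with hmi | him
  · exact flagOf_congr fun a ha => hvw a (by omega) (by omega)
  · have hIcc : Set.Icc 1 (min m n) = Set.Icc 1 (min m n) \ {i, i + 1} ∪ {i, i + 1} :=
      (Set.sdiff_union_of_subset (by rintro _ (rfl | rfl) <;> constructor <;> omega)).symm
    have hrest : v '' (Set.Icc 1 (min m n) \ {i, i + 1}) =
        w '' (Set.Icc 1 (min m n) \ {i, i + 1}) :=
      Set.image_congr fun a ha => hvw a (ha.2 <| .inl ·) (ha.2 <| .inr ·)
    rw [flagOf, flagOf, hIcc, Set.image_union, Set.image_union, span_union, span_union, hrest,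
      Set.image_pair, Set.image_pair, hspan]

lemma isCompleteFlag_flagOf (hv : flagOf n v n = ⊤) : IsCompleteFlag n (flagOf n v) := by
  have hindep : LinearIndepOn ℂ v (Set.Icc 1 n) :=
    linearIndependent_of_top_le_span_of_card_eq_finrank
      (by rw [← hv, flagOf, min_self, Set.image_eq_range]) (by simp)
  refine ⟨fun k hk => ?_, fun k => ?_, fun k hk => ?_⟩
  · rw [flagOf, min_eq_left hk, Set.image_eq_range,
      finrank_span_eq_card (hindep.mono (Set.Icc_subset_Icc_right hk))]
    simp
  · exact span_mono (Set.image_mono (Set.Icc_subset_Icc_right (by omega)))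
  · rw [flagOf, flagOf, min_eq_right hk, min_self]

lemma IsCompleteFlag.notMem_flagOf (hv : IsCompleteFlag n (flagOf n v)) (hk : 1 ≤ k)
    (hkn : k ≤ n) : v k ∉ flagOf n v (k - 1) := by
  intro hmem
  have hcov := hv.covBy (k := k - 1) (by omega)
  rw [Nat.sub_add_cancel hk, flagOf_eq_sup_span_singleton hk hkn,
    sup_eq_left.2 ((span_singleton_le_iff_mem _ _).2 hmem)] at hcov
  exact hcov.lt.false

end Flags

section StandardBasis

variable {n k m : ℕ}

lemma flagOf_stdVec (hk : k ≤ n) : flagOf n (stdVec n) k = stdSub n k := by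
  rw [flagOf, min_eq_left hk, stdSub]

lemma stdVec_mem_stdSub (hm : 1 ≤ m) (hmk : m ≤ k) : stdVec n m ∈ stdSub n k :=
  subset_span ⟨m, ⟨hm, hmk⟩, rfl⟩

lemma stdSub_mono : Monotone (stdSub n) := fun _ _ h =>
  span_mono (Set.image_mono (Set.Icc_subset_Icc_right h))

lemma stdSub_self_eq_top : stdSub n n = ⊤ := by
  rw [eq_top_iff, ← (Pi.basisFun ℂ (Fin n)).span_eq, span_le]
  rintro _ ⟨j, rfl⟩
  refine subset_span ⟨j + 1, ⟨by omega, by omega⟩, ?_⟩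
  rw [stdVec, dif_pos ⟨by omega, by omega⟩, Pi.basisFun_apply]
  rfl

lemma stdVec_self_notMem_stdSub (hn : 1 ≤ n) : stdVec n n ∉ stdSub n (n - 1) := by
  have hcomplete : IsCompleteFlag n (flagOf n (stdVec n)) :=
    isCompleteFlag_flagOf ((flagOf_stdVec le_rfl).trans stdSub_self_eq_top)
  simpa only [flagOf_stdVec (Nat.sub_le n 1)] using hcomplete.notMem_flagOf hn le_rfl

end StandardBasis

section Orbits

variable {n k : ℕ} {V V' : ℕ → Submodule ℂ (Fin n → ℂ)}

lemma InKOrbit.refl (V : ℕ → Submodule ℂ (Fin n → ℂ)) : InKOrbit n V V :=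
  ⟨LinearEquiv.refl ℂ _, ⟨rfl, map_id _⟩, funext fun _ => map_id _⟩

lemma InKOrbit.stdVec_mem_iff (h : InKOrbit n V V') : stdVec n n ∈ V' k ↔ stdVec n n ∈ V k := by
  obtain ⟨g, ⟨hg, -⟩, rfl⟩ := h
  exact (mem_map_equiv (V k)).trans (by rw [g.symm_apply_eq.2 hg.symm])

lemma InKOrbit.le_stdSub_iff (h : InKOrbit n V V') :
    V' k ≤ stdSub n (n - 1) ↔ V k ≤ stdSub n (n - 1) := by
  obtain ⟨g, ⟨-, hg⟩, rfl⟩ := h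
  nth_rw 1 [← hg]
  exact map_le_map_iff_of_injective g.injective _ _

end Orbits

section Torus

/-- The diagonal linear automorphism of `ℂ^n` with `e_m ↦ t m • e_m`, used to move flags
within a `K`-orbit. It reads the sequence `t` only at the 1-based indices `1 ≤ m ≤ n`. -/
def torusElement (n : ℕ) (t : ℕ → ℂˣ) : (Fin n → ℂ) ≃ₗ[ℂ] (Fin n → ℂ) :=
  LinearEquiv.piCongrRight fun j => DistribMulAction.toLinearEquiv ℂ ℂ (t (j + 1))

variable {n : ℕ} {t : ℕ → ℂˣ}

lemma torusElement_stdVec (m : ℕ) : torusElement n t (stdVec n m) = t m • stdVec n m := by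
  rw [stdVec]
  split_ifs with hm
  · ext j
    rcases eq_or_ne j ⟨m - 1, by omega⟩ with rfl | hj
    · simp [torusElement, Nat.sub_add_cancel hm.1]
    · simp [torusElement, hj]
  · simp

lemma map_torusElement_stdSub (k : ℕ) :
    (stdSub n k).map (torusElement n t).toLinearMap = stdSub n k :=
  map_span_image_of_forall_eq_smul fun m _ => ⟨t m, torusElement_stdVec m⟩

lemma torusElement_mem_Ksub (ht : t n = 1) : torusElement n t ∈ Ksub n :=
  ⟨by rw [torusElement_stdVec, ht, one_smul], map_torusElement_stdSub _⟩

end Torus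

section Representatives

variable {n i j k m : ℕ}

lemma repVec_of_lt (hm : m < i) : repVec n i j m = stdVec n m := by grind [repVec]

lemma repVec_of_gt (hij : i ≤ j) (hm : j < m) : repVec n i j m = stdVec n (m - 1) := by
  grind [repVec]

lemma repVec_of_lt_of_lt (him : i < m) (hmj : m < j) : repVec n i j m = stdVec n m := by
  grind [repVec]

lemma repVec_left (hij : i < j) : repVec n i j i = stdVec n i + stdVec n n := by
  simp [repVec, hij]

lemma repVec_right (hij : i ≤ j) : repVec n i j j = stdVec n n := by grind [repVec]

lemma exists_repVec_self_eq_stdVec (n i m : ℕ) : ∃ m', repVec n i i m = stdVec n m' := by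
  rcases lt_trichotomy m i with hm | rfl | hm
  exacts [⟨m, repVec_of_lt hm⟩, ⟨n, repVec_right le_rfl⟩, ⟨m - 1, repVec_of_gt le_rfl hm⟩]

lemma repFlag_of_lt (hk : k < i) (hkn : k ≤ n) : repFlag n i j k = stdSub n k := by
  rw [← flagOf_stdVec hkn]
  exact flagOf_congr fun m hm => repVec_of_lt (by omega)

lemma repFlag_apply_left (hi : 1 ≤ i) (hin : i ≤ n) :
    repFlag n i j i = stdSub n (i - 1) ⊔ span ℂ {repVec n i j i} := by
  rw [← repFlag_of_lt (j := j) (show i - 1 < i by omega) (by omega), repFlag,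
    flagOf_eq_sup_span_singleton hi hin]

lemma repFlag_self_apply_self (hi : 1 ≤ i) (hin : i ≤ n) :
    repFlag n i i i = stdSub n (i - 1) ⊔ span ℂ {stdVec n n} := by
  rw [repFlag_apply_left hi hin, repVec_right le_rfl]

lemma repFlag_apply_left_of_lt (hi : 1 ≤ i) (hin : i ≤ n) (hij : i < j) :
    repFlag n i j i = stdSub n (i - 1) ⊔ span ℂ {stdVec n i + stdVec n n} := by
  rw [repFlag_apply_left hi hin, repVec_left hij]

lemma repFlag_succ_succ_apply (hi : 1 ≤ i) (hin : i ≤ n) :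
    repFlag n (i + 1) (i + 1) i = stdSub n (i - 1) ⊔ span ℂ {stdVec n i} := by
  rw [repFlag_of_lt i.lt_add_one hin, ← flagOf_stdVec hin, flagOf_eq_sup_span_singleton hi hin,
    flagOf_stdVec (by omega)]

lemma repFlag_self_apply_succ (hi : 1 ≤ i) (hin : i < n) :
    repFlag n i i (i + 1) = stdSub n (i - 1) ⊔ span ℂ {stdVec n n, stdVec n i} := by
  rw [← repFlag_of_lt (j := i) (show i - 1 < i by omega) (by omega), repFlag,
    flagOf_succ_eq_sup_span_pair hi hin, repVec_right le_rfl, repVec_of_gt le_rfl i.lt_add_one,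
    Nat.add_sub_cancel]

lemma repFlag_succ_succ_apply_of_ne (hi : 1 ≤ i) (hin : i < n) (hm : m ≠ i) :
    repFlag n (i + 1) (i + 1) m = repFlag n i i m := by
  refine flagOf_eq_flagOf_of_span_pair_eq hi hin (fun m hm hm' => ?_) ?_ hm
  · grind [repVec]
  · rw [repVec_of_lt i.lt_add_one, repVec_right le_rfl, repVec_right le_rfl,
      repVec_of_gt le_rfl i.lt_add_one, Nat.add_sub_cancel, Set.pair_comm]

lemma repFlag_succ_apply_of_ne (hi : 1 ≤ i) (hin : i < n) (hm : m ≠ i) :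
    repFlag n i (i + 1) m = repFlag n i i m := by
  refine flagOf_eq_flagOf_of_span_pair_eq hi hin (fun m hm hm' => ?_) ?_ hm
  · grind [repVec]
  · rw [repVec_left i.lt_add_one, repVec_right i.le_succ, repVec_right le_rfl,
      repVec_of_gt le_rfl i.lt_add_one, Nat.add_sub_cancel, span_pair_add_left, Set.pair_comm]

lemma stdVec_mem_repFlag (hi : 1 ≤ i) (hij : i ≤ j) (hjk : j ≤ k) (hjn : j ≤ n) :
    stdVec n n ∈ repFlag n i j k := by
  have hmem := mem_flagOf (v := repVec n i j) (hi.trans hij) hjk hjn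
  rwa [repVec_right hij] at hmem

lemma repFlag_eq_top (hi : 1 ≤ i) (hij : i ≤ j) (hjn : j ≤ n) : repFlag n i j n = ⊤ := by
  rw [eq_top_iff, ← stdSub_self_eq_top, stdSub, span_le]
  rintro _ ⟨m, ⟨hm, hmn⟩, rfl⟩
  have hrep {m : ℕ} (hm : 1 ≤ m) (hmn : m ≤ n) : repVec n i j m ∈ repFlag n i j n :=
    mem_flagOf hm hmn hmn
  have hlast : stdVec n n ∈ repFlag n i j n := stdVec_mem_repFlag hi hij hjn hjn
  rcases hmn.eq_or_lt with rfl | hlt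
  · exact hlast
  rcases le_or_gt j m with hjm | hmj
  · exact repVec_of_gt (n := n) hij (Nat.lt_add_one_of_le hjm) ▸ hrep (by omega) hlt
  rcases lt_trichotomy m i with hmi | rfl | him
  · exact repVec_of_lt (n := n) (j := j) hmi ▸ hrep hm hmn
  · exact ((repFlag n m j n).add_mem_iff_left hlast).1 (repVec_left (n := n) hmj ▸ hrep hm hmn)
  · exact repVec_of_lt_of_lt (n := n) him hmj ▸ hrep hm hmn

lemma isCompleteFlag_repFlag (hi : 1 ≤ i) (hij : i ≤ j) (hjn : j ≤ n) :
    IsCompleteFlag n (repFlag n i j) :=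
  isCompleteFlag_flagOf (repFlag_eq_top hi hij hjn)

lemma stdVec_notMem_repFlag (hi : 1 ≤ i) (hij : i ≤ j) (hjn : j ≤ n) :
    stdVec n n ∉ repFlag n i j (j - 1) := by
  have hnotMem := (isCompleteFlag_repFlag hi hij hjn).notMem_flagOf (hi.trans hij) hjn
  rwa [repVec_right hij] at hnotMem

lemma not_repFlag_le_stdSub (hi : 1 ≤ i) (hij : i < j) (hin : i < n) :
    ¬ repFlag n i j i ≤ stdSub n (n - 1) := by
  intro hle
  have hmem : stdVec n i + stdVec n n ∈ stdSub n (n - 1) :=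
    hle (repFlag_apply_left_of_lt hi hin.le hij ▸ mem_sup_right (mem_span_singleton_self _))
  exact stdVec_self_notMem_stdSub (by omega)
    ((Submodule.add_mem_iff_right _ (stdVec_mem_stdSub hi (by omega))).1 hmem)

lemma repFlag_le_stdSub (hki : k < i) (hkn : k < n) : repFlag n i j k ≤ stdSub n (n - 1) :=
  (repFlag_of_lt hki hkn.le).trans_le (stdSub_mono (by omega))

lemma map_torusElement_repFlag_self (t : ℕ → ℂˣ) (k : ℕ) :
    (repFlag n i i k).map (torusElement n t).toLinearMap = repFlag n i i k :=
  map_span_image_of_forall_eq_smul fun m _ => by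
    obtain ⟨m', hm'⟩ := exists_repVec_self_eq_stdVec n i m
    exact ⟨t m', hm' ▸ torusElement_stdVec m'⟩

lemma repFlag_self_ne_repFlag_succ_succ (hi : 1 ≤ i) (hin : i < n) :
    repFlag n i i ≠ repFlag n (i + 1) (i + 1) := fun h =>
  stdVec_notMem_repFlag (Nat.le_add_left 1 i) le_rfl hin
    (h ▸ stdVec_mem_repFlag hi le_rfl le_rfl hin.le)

lemma not_inKOrbit_repFlag_self (hi : 1 ≤ i) (hin : i < n) :
    ¬ InKOrbit n (repFlag n i (i + 1)) (repFlag n i i) := fun h =>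
  stdVec_notMem_repFlag hi i.le_succ hin
    (h.stdVec_mem_iff.1 (stdVec_mem_repFlag hi le_rfl le_rfl hin.le))

lemma not_inKOrbit_repFlag_succ_succ (hi : 1 ≤ i) (hin : i < n) :
    ¬ InKOrbit n (repFlag n i (i + 1)) (repFlag n (i + 1) (i + 1)) := fun h =>
  not_repFlag_le_stdSub hi i.lt_add_one hin
    (h.le_stdSub_iff.1 (repFlag_le_stdSub i.lt_add_one hin))

variable {V : ℕ → Submodule ℂ (Fin n → ℂ)}

lemma inKOrbit_repFlag_succ_of_eq_sup_span (hi : 1 ≤ i) (hin : i < n)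
    (hV : ∀ m, m ≠ i → V m = repFlag n i i m) {c : ℂˣ}
    (hVi : V i = stdSub n (i - 1) ⊔ span ℂ {c • stdVec n i + stdVec n n}) :
    InKOrbit n (repFlag n i (i + 1)) V := by
  refine ⟨torusElement n (Function.update 1 i c),
    torusElement_mem_Ksub (Function.update_of_ne hin.ne' _ _), funext fun m => ?_⟩
  rcases eq_or_ne m i with rfl | hm
  · rw [actFlag, repFlag_apply_left_of_lt hi hin.le m.lt_add_one, Submodule.map_sup,
      map_torusElement_stdSub, map_span, Set.image_singleton, LinearEquiv.coe_coe, map_add,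
      torusElement_stdVec, torusElement_stdVec, Function.update_self,
      Function.update_of_ne hin.ne', Pi.one_apply, one_smul, hVi]
  · rw [actFlag, repFlag_succ_apply_of_ne hi hin hm, map_torusElement_repFlag_self, hV m hm]

lemma eq_repFlag_or_inKOrbit_of_forall_ne (hi : 1 ≤ i) (hin : i < n) (hflag : IsCompleteFlag n V)
    (hV : ∀ m, m ≠ i → V m = repFlag n i i m) :
    V = repFlag n i i ∨ V = repFlag n (i + 1) (i + 1) ∨ InKOrbit n (repFlag n i (i + 1)) V := by
  have hprev : V (i - 1) = stdSub n (i - 1) := by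
    rw [hV _ (by omega), repFlag_of_lt (by omega) (by omega)]
  have hcov : stdSub n (i - 1) ⋖ V i := by
    simpa only [hprev, Nat.sub_add_cancel hi] using hflag.covBy (k := i - 1) (by omega)
  have hle : V i ≤ stdSub n (i - 1) ⊔ span ℂ {stdVec n n, stdVec n i} := by
    rw [← repFlag_self_apply_succ hi hin, ← hV _ (by omega)]
    exact hflag.2.1 i
  have heq {F : ℕ → Submodule ℂ (Fin n → ℂ)} (hF : ∀ m, m ≠ i → F m = repFlag n i i m)
      (hFi : V i = F i) : V = F := funext fun m => by
    rcases eq_or_ne m i with rfl | hm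
    exacts [hFi, (hV m hm).trans (hF m hm).symm]
  rcases eq_sup_span_singleton_trichotomy_of_covBy hcov hle with hVi | hVi | ⟨c, hVi⟩
  · exact .inl (heq (fun _ _ => rfl) (hVi.trans (repFlag_self_apply_self hi hin.le).symm))
  · exact .inr (.inl (heq (fun _ => repFlag_succ_succ_apply_of_ne hi hin)
      (hVi.trans (repFlag_succ_succ_apply hi hin.le).symm)))
  · exact .inr (.inr (inKOrbit_repFlag_succ_of_eq_sup_span hi hin hV hVi))

end Representatives

/-- If a complete flag agrees with `F_i` in every degree `m ≠ i` (`1 ≤ i ≤ n-1`), then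
exactly one of the following holds: it equals `F_i`; it equals `F_{i+1}`; it lies in the
`K`-orbit of `F_{i,i+1}`; moreover each possibility occurs (the root `α_i` is noncompact
for `Q_i` and `m(s_{α_i}) * Q_i = Q_{i,i+1}`). -/
theorem stmt_14 (n : ℕ) (hn : 2 ≤ n) (i : ℕ) (hi1 : 1 ≤ i) (hin : i ≤ n - 1) :
    (∀ V : ℕ → Submodule ℂ (Fin n → ℂ), IsCompleteFlag n V →
      (∀ m, m ≠ i → V m = repFlag n i i m) →
      (V = repFlag n i i ∧ V ≠ repFlag n (i + 1) (i + 1) ∧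
          ¬ InKOrbit n (repFlag n i (i + 1)) V) ∨
        (V ≠ repFlag n i i ∧ V = repFlag n (i + 1) (i + 1) ∧
          ¬ InKOrbit n (repFlag n i (i + 1)) V) ∨
        (V ≠ repFlag n i i ∧ V ≠ repFlag n (i + 1) (i + 1) ∧
          InKOrbit n (repFlag n i (i + 1)) V)) ∧
    (∃ V, IsCompleteFlag n V ∧ (∀ m, m ≠ i → V m = repFlag n i i m) ∧
      V = repFlag n i i) ∧
    (∃ V, IsCompleteFlag n V ∧ (∀ m, m ≠ i → V m = repFlag n i i m) ∧
      V = repFlag n (i + 1) (i + 1)) ∧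
    (∃ V, IsCompleteFlag n V ∧ (∀ m, m ≠ i → V m = repFlag n i i m) ∧
      InKOrbit n (repFlag n i (i + 1)) V) := by
  have hin' : i < n := by omega
  refine ⟨fun V hflag hV => ?_, ?_, ?_, ?_⟩
  · rcases eq_repFlag_or_inKOrbit_of_forall_ne hi1 hin' hflag hV with rfl | rfl | horbit
    · exact .inl ⟨rfl, repFlag_self_ne_repFlag_succ_succ hi1 hin',
        not_inKOrbit_repFlag_self hi1 hin'⟩
    · exact .inr (.inl ⟨(repFlag_self_ne_repFlag_succ_succ hi1 hin').symm, rfl,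
        not_inKOrbit_repFlag_succ_succ hi1 hin'⟩)
    · refine .inr (.inr ⟨?_, ?_, horbit⟩) <;> rintro rfl
      · exact not_inKOrbit_repFlag_self hi1 hin' horbit
      · exact not_inKOrbit_repFlag_succ_succ hi1 hin' horbit
  · exact ⟨_, isCompleteFlag_repFlag hi1 le_rfl hin'.le, fun _ _ => rfl, rfl⟩
  · exact ⟨_, isCompleteFlag_repFlag (by omega) le_rfl hin',
      fun _ => repFlag_succ_succ_apply_of_ne hi1 hin', rfl⟩
  · exact ⟨_, isCompleteFlag_repFlag hi1 i.le_succ hin',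
      fun _ => repFlag_succ_apply_of_ne hi1 hin', .refl _⟩
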